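/- arXiv:1603.09472 — 6 statements merged into one kernel-verified Lean document; each statement's English description precedes it below -/
import Mathlib

section
/- Let (Ω,𝓕,ℙ) be a probability space, (T,𝓑,μ) a σ-finite measure space, and S a Polish space. Let c: Ω×T×S→ℝ be jointly measurable with s ↦ c_t(ω,s) continuous for every (ω,t), and let X^n: Ω×T→S (n=0,1,2,…) be jointly measurable processes. Let h ∈ L¹(μ) with h ≥ 0 and define the truncation c^h_t(ω,x) := max{−h_t, min{h_t, c_t(ω,x)}} and I(X^n,c^h)(ω) = ∫_T c^h_t(ω,X^n_t(ω)) μ(dt). Suppose X^n converges to X^0 in probability in finite dimension, i.e. there exists T₀ ∈ 𝓑 with μ(T∖T₀)=0 such that for all t₁,…,t_k ∈ T₀ the random vector (X^n_{t₁},…,X^n_{t_k}) converges in probability to (X^0_{t₁},…,X^0_{t_k}). Then for every bounded real random variable Y on Ω and every bounded Lipschitz function f: ℝ→ℝ, E[Y·f(I(X^n,c^h))] → E[Y·f(I(X^0,c^h))] as n → ∞. -/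
open MeasureTheory Filter Topology

/-- **Stable convergence of truncated integral functionals.**
If the jointly measurable processes `X^n` converge to `X^0` in probability in finite
dimension, then for the truncated cost `c^h_t(ω,x) = max (−h_t) (min h_t (c_t(ω,x)))`
with `0 ≤ h ∈ L¹(μ)`, and for every bounded random variable `Y` and bounded Lipschitz
`f : ℝ → ℝ`, one has `E[Y f(I(X^n, c^h))] → E[Y f(I(X^0, c^h))]`. -/
theorem stable_convergence_truncated_integrals
    {Ω : Type*} [MeasurableSpace Ω] (P : Measure Ω) [IsProbabilityMeasure P]
    {T : Type*} [MeasurableSpace T] (μ : Measure T) [SigmaFinite μ]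
    {S : Type*} [MetricSpace S] [CompleteSpace S] [TopologicalSpace.SeparableSpace S]
    [MeasurableSpace S] [BorelSpace S]
    (c : Ω → T → S → ℝ)
    (hc_meas : Measurable fun p : Ω × T × S => c p.1 p.2.1 p.2.2)
    (hc_cont : ∀ ω t, Continuous fun s => c ω t s)
    (X : ℕ → Ω → T → S)
    (hX_meas : ∀ n, Measurable fun p : Ω × T => X n p.1 p.2)
    (h : T → ℝ) (hh_int : Integrable h μ) (hh_nonneg : ∀ t, 0 ≤ h t)
    -- convergence in probability in finite dimension
    (hfd : ∃ T₀ : Set T, MeasurableSet T₀ ∧ μ T₀ᶜ = 0 ∧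
      ∀ (k : ℕ) (t : Fin k → T), (∀ i, t i ∈ T₀) →
        TendstoInMeasure P (fun n ω => fun i => X n ω (t i)) atTop
          (fun ω => fun i => X 0 ω (t i)))
    (Y : Ω → ℝ) (hY_meas : Measurable Y) (hY_bdd : ∃ C : ℝ, ∀ ω, |Y ω| ≤ C)
    (f : ℝ → ℝ) (K : NNReal) (hf_lip : LipschitzWith K f)
    (hf_bdd : ∃ C : ℝ, ∀ x, |f x| ≤ C) :
    Tendsto
      (fun n => ∫ ω, Y ω *
        f (∫ t, max (-(h t)) (min (h t) (c ω t (X n ω t))) ∂μ) ∂P) atTop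
      (𝓝 (∫ ω, Y ω *
        f (∫ t, max (-(h t)) (min (h t) (c ω t (X 0 ω t))) ∂μ) ∂P)) := by
  classical
  obtain ⟨T₀, hT₀m, hT₀, hconv⟩ := hfd
  obtain ⟨CY, hCY⟩ := hY_bdd
  obtain ⟨Cf, hCf⟩ := hf_bdd
  set F : ℕ → Ω → T → ℝ := fun n ω t => max (-(h t)) (min (h t) (c ω t (X n ω t))) with hF
  have hFb : ∀ n ω t, |F n ω t| ≤ h t := by
    intro n ω t
    rw [abs_le]
    exact ⟨le_max_left _ _, max_le (by linarith [hh_nonneg t]) (min_le_left _ _)⟩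
  have hcX : ∀ n, Measurable fun p : Ω × T => c p.1 p.2 (X n p.1 p.2) := by
    intro n
    exact hc_meas.comp (measurable_fst.prodMk (measurable_snd.prodMk (hX_meas n)))
  have hsnd : Integrable (fun p : Ω × T => h p.2) (P.prod μ) := hh_int.comp_snd P
  have hFm : ∀ n, AEStronglyMeasurable (fun p : Ω × T => F n p.1 p.2) (P.prod μ) := by
    intro n
    have h1 := hsnd.aestronglyMeasurable
    exact h1.neg.sup (h1.inf (hcX n).aestronglyMeasurable)
  have hFi : ∀ n, Integrable (fun p : Ω × T => F n p.1 p.2) (P.prod μ) := by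
    intro n
    exact hsnd.mono' (hFm n) (Eventually.of_forall fun p => by
      simpa using hFb n p.1 p.2)
  have hDi : ∀ n, Integrable (fun p : Ω × T => |F n p.1 p.2 - F 0 p.1 p.2|) (P.prod μ) :=
    fun n => ((hFi n).sub (hFi 0)).abs
  have hFti : ∀ n t, Measurable fun ω => F n ω t := by
    intro n t
    exact measurable_const.max (measurable_const.min ((hcX n).comp measurable_prodMk_right))
  have hFωi : ∀ n, ∀ᵐ ω ∂P, Integrable (F n ω) μ := fun n => (hFi n).prod_right_ae
  have hDb : ∀ n ω t, |F n ω t - F 0 ω t| ≤ 2 * h t := by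
    intro n ω t
    have := abs_sub (F n ω t) (F 0 ω t)
    linarith [hFb n ω t, hFb 0 ω t]
  have step1 : ∀ t ∈ T₀, Tendsto (fun n => ∫ ω, |F n ω t - F 0 ω t| ∂P) atTop (𝓝 0) := by
    intro t ht
    have hm := hconv 1 (fun _ => t) (fun _ => ht)
    refine tendsto_of_subseq_tendsto fun ns hns => ?_
    have hm' : TendstoInMeasure P (fun n ω => fun _ : Fin 1 => X (ns n) ω t) atTop
        (fun ω => fun _ => X 0 ω t) := fun ε hε => (hm ε hε).comp hns
    obtain ⟨ms, hms, hae⟩ := hm'.exists_seq_tendsto_ae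
    refine ⟨ms, ?_⟩
    have : (0:ℝ) = ∫ ω, (0:ℝ) ∂P := by simp
    rw [this]
    refine tendsto_integral_of_dominated_convergence (fun _ => 2 * h t) ?_
      (integrable_const _) ?_ ?_
    · intro n
      exact (((hFti _ t).sub (hFti 0 t)).abs).aestronglyMeasurable
    · intro n
      exact Eventually.of_forall fun ω => by
        simpa using hDb (ns (ms n)) ω t
    · filter_upwards [hae] with ω hω
      have h1 : Tendsto (fun i => X (ns (ms i)) ω t) atTop (𝓝 (X 0 ω t)) :=
        (tendsto_pi_nhds.1 hω) 0
      have hc : Continuous fun s => max (-(h t)) (min (h t) (c ω t s)) :=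
        continuous_const.max (continuous_const.min (hc_cont ω t))
      have h2 : Tendsto (fun i => F (ns (ms i)) ω t) atTop (𝓝 (F 0 ω t)) :=
        (hc.tendsto (X 0 ω t)).comp h1
      simpa using (h2.sub_const (F 0 ω t)).abs
  have step2 : Tendsto (fun n => ∫ t, ∫ ω, |F n ω t - F 0 ω t| ∂P ∂μ) atTop (𝓝 0) := by
    have : (0:ℝ) = ∫ t, (0:ℝ) ∂μ := by simp
    rw [this]
    refine tendsto_integral_of_dominated_convergence (fun t => 2 * h t) ?_
      (hh_int.const_mul 2) ?_ ?_
    · intro n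
      exact (hDi n).integral_prod_right.aestronglyMeasurable
    · intro n
      refine Eventually.of_forall fun t => ?_
      have := norm_integral_le_of_norm_le_const (μ := P) (f := fun ω => |F n ω t - F 0 ω t|)
        (C := 2 * h t) (Eventually.of_forall fun ω => by simpa using hDb n ω t)
      simpa using this
    · have : ∀ᵐ t ∂μ, t ∈ T₀ := by
        rw [ae_iff]; exact hT₀
      filter_upwards [this] with t ht using step1 t ht
  have step3 : Tendsto (fun n => CY * K * ∫ t, ∫ ω, |F n ω t - F 0 ω t| ∂P ∂μ) atTop (𝓝 0) := by
    simpa using step2.const_mul (CY * K)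
  have hGi : ∀ n, Integrable (fun ω => Y ω * f (∫ t, F n ω t ∂μ)) P := by
    intro n
    have hm : AEStronglyMeasurable (fun ω => Y ω * f (∫ t, F n ω t ∂μ)) P :=
      hY_meas.aestronglyMeasurable.mul
        (hf_lip.continuous.comp_aestronglyMeasurable (hFi n).integral_prod_left.aestronglyMeasurable)
    refine (integrable_const (CY * Cf)).mono' hm (Eventually.of_forall fun ω => ?_)
    rw [Real.norm_eq_abs, abs_mul]
    exact mul_le_mul (hCY ω) (hCf _) (abs_nonneg _) ((abs_nonneg _).trans (hCY ω))
  rw [tendsto_iff_norm_sub_tendsto_zero]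
  refine squeeze_zero (fun n => norm_nonneg _) (fun n => ?_) step3
  change ‖(∫ ω, Y ω * f (∫ t, F n ω t ∂μ) ∂P) - ∫ ω, Y ω * f (∫ t, F 0 ω t ∂μ) ∂P‖ ≤ _
  rw [← integral_sub (hGi n) (hGi 0), ← integral_integral_swap (hDi n), ← integral_const_mul]
  refine norm_integral_le_of_norm_le ((hDi n).integral_prod_left.const_mul _) ?_
  filter_upwards [hFωi n, hFωi 0] with ω hn h0
  rw [← mul_sub, norm_mul, mul_assoc]
  refine mul_le_mul (hCY ω) ?_ (norm_nonneg _) ((abs_nonneg _).trans (hCY ω))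
  rw [← dist_eq_norm]
  refine (hf_lip.dist_le_mul _ _).trans ?_
  gcongr
  rw [dist_eq_norm, ← integral_sub hn h0]
  exact norm_integral_le_integral_norm _
end

section
/- Let (Ω,𝓕,ℙ) be a probability space, (T,𝓑,μ) a σ-finite measure space, and S a Polish space. Let c: Ω×T×S→ℝ be jointly measurable with s ↦ c_t(ω,s) continuous for every (ω,t), and let X^n: Ω×T→S (n=0,1,2,…) be jointly measurable processes. Let h ∈ L¹(μ) with h ≥ 0, set c^h_t(ω,x) := max{−h_t, min{h_t, c_t(ω,x)}} and I(X^n,c^h)(ω) = ∫_T c^h_t(ω,X^n_t(ω)) μ(dt). Suppose there exists T₀ ∈ 𝓑 with μ(T∖T₀)=0 such that for all t₁,…,t_k ∈ T₀ the random vector (X^n_{t₁},…,X^n_{t_k}) converges in probability to (X^0_{t₁},…,X^0_{t_k}). Then for every bounded real random variable Y on Ω and every natural number l, E[Y·(I(X^n,c^h))^l] → E[Y·(I(X^0,c^h))^l] as n → ∞. -/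
open MeasureTheory Filter Topology

/-- **Convergence of moments of truncated integral functionals.**
If the jointly measurable processes `X^n` converge to `X^0` in probability in finite
dimension, then for the truncated cost `c^h_t(ω,x) = max (−h_t) (min h_t (c_t(ω,x)))`
with `0 ≤ h ∈ L¹(μ)`, for every bounded random variable `Y` and every `l : ℕ`,
`E[Y (I(X^n, c^h))^l] → E[Y (I(X^0, c^h))^l]`. -/
theorem convergence_moments_truncated_integrals
    {Ω : Type*} [MeasurableSpace Ω] (P : Measure Ω) [IsProbabilityMeasure P]
    {T : Type*} [MeasurableSpace T] (μ : Measure T) [SigmaFinite μ]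
    {S : Type*} [MetricSpace S] [CompleteSpace S] [TopologicalSpace.SeparableSpace S]
    [MeasurableSpace S] [BorelSpace S]
    (c : Ω → T → S → ℝ)
    (hc_meas : Measurable fun p : Ω × T × S => c p.1 p.2.1 p.2.2)
    (hc_cont : ∀ ω t, Continuous fun s => c ω t s)
    (X : ℕ → Ω → T → S)
    (hX_meas : ∀ n, Measurable fun p : Ω × T => X n p.1 p.2)
    (h : T → ℝ) (hh_int : Integrable h μ) (hh_nonneg : ∀ t, 0 ≤ h t)
    -- convergence in probability in finite dimension
    (hfd : ∃ T₀ : Set T, MeasurableSet T₀ ∧ μ T₀ᶜ = 0 ∧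
      ∀ (k : ℕ) (t : Fin k → T), (∀ i, t i ∈ T₀) →
        TendstoInMeasure P (fun n ω => fun i => X n ω (t i)) atTop
          (fun ω => fun i => X 0 ω (t i)))
    (Y : Ω → ℝ) (hY_meas : Measurable Y) (hY_bdd : ∃ C : ℝ, ∀ ω, |Y ω| ≤ C)
    (l : ℕ) :
    Tendsto
      (fun n => ∫ ω, Y ω *
        (∫ t, max (-(h t)) (min (h t) (c ω t (X n ω t))) ∂μ) ^ l ∂P) atTop
      (𝓝 (∫ ω, Y ω *
        (∫ t, max (-(h t)) (min (h t) (c ω t (X 0 ω t))) ∂μ) ^ l ∂P)) := by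
  obtain ⟨T₀, -, hT₀, hconv⟩ := hfd
  obtain ⟨C, hC⟩ := hY_bdd
  set F : ℕ → Ω → T → ℝ := fun n ω t => max (-(h t)) (min (h t) (c ω t (X n ω t))) with hF
  have hFb : ∀ n ω t, |F n ω t| ≤ h t := by
    intro n ω t
    have := hh_nonneg t
    rw [abs_le]
    exact ⟨le_max_left _ _, max_le (by linarith) (min_le_left _ _)⟩
  have hcX : ∀ n, Measurable fun p : Ω × T => c p.1 p.2 (X n p.1 p.2) := fun n =>
    hc_meas.comp (measurable_fst.prodMk (measurable_snd.prodMk (hX_meas n)))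
  have hFt : ∀ n t, Measurable fun ω => F n ω t := by
    intro n t
    have h1 : Measurable fun ω => c ω t (X n ω t) :=
      (hcX n).comp (measurable_id.prodMk measurable_const)
    exact measurable_const.max (measurable_const.min h1)
  have hhint : Integrable (fun p : Ω × T => h p.2) (P.prod μ) := hh_int.comp_snd P
  have hFint : ∀ n, Integrable (fun p : Ω × T => F n p.1 p.2) (P.prod μ) := by
    intro n
    refine hhint.mono' ?_ (Eventually.of_forall fun p => hFb n p.1 p.2)
    exact hhint.1.neg.sup (hhint.1.inf (hcX n).aestronglyMeasurable)
  have hDint : ∀ n, Integrable (fun p : Ω × T => |F n p.1 p.2 - F 0 p.1 p.2|) (P.prod μ) :=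
    fun n => ((hFint n).sub (hFint 0)).abs
  have hDb : ∀ n ω t, |F n ω t - F 0 ω t| ≤ 2 * h t := by
    intro n ω t
    have h1 := hFb n ω t
    have h2 := hFb 0 ω t
    have h3 := abs_sub (F n ω t) (F 0 ω t)
    linarith
  -- pointwise in t
  have key1 : ∀ t ∈ T₀, Tendsto (fun n => ∫ ω, |F n ω t - F 0 ω t| ∂P) atTop (𝓝 0) := by
    intro t ht
    refine tendsto_of_subseq_tendsto fun ns hns => ?_
    have hm := (hconv 1 (fun _ => t) (fun _ => ht)).comp hns
    obtain ⟨ms, hms, hae⟩ := hm.exists_seq_tendsto_ae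
    refine ⟨ms, ?_⟩
    have := tendsto_integral_of_dominated_convergence (μ := P)
      (F := fun n ω => |F (ns (ms n)) ω t - F 0 ω t|) (f := fun _ => (0 : ℝ))
      (fun _ => 2 * h t)
      (fun n => ((hFt _ t).sub (hFt 0 t)).abs.aestronglyMeasurable)
      (integrable_const _)
      (fun n => Eventually.of_forall fun ω => by
        simpa using hDb (ns (ms n)) ω t) ?_
    · simpa using this
    · filter_upwards [hae] with ω hω
      have hx : Tendsto (fun n => X (ns (ms n)) ω t) atTop (𝓝 (X 0 ω t)) :=
        (tendsto_pi_nhds.1 hω) 0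
      have hcc : Continuous fun s => |max (-(h t)) (min (h t) (c ω t s)) - F 0 ω t| := by
        have := hc_cont ω t
        fun_prop
      have := (hcc.tendsto (X 0 ω t)).comp hx
      simpa [hF, Function.comp_def] using this
  have key2 : Tendsto (fun n => ∫ t, ∫ ω, |F n ω t - F 0 ω t| ∂P ∂μ) atTop (𝓝 0) := by
    have := tendsto_integral_of_dominated_convergence (μ := μ)
      (F := fun n t => ∫ ω, |F n ω t - F 0 ω t| ∂P) (f := fun _ => (0 : ℝ))
      (fun t => 2 * h t) (fun n => (hDint n).integral_prod_right.aestronglyMeasurable)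
      (hh_int.const_mul 2)
      (fun n => Eventually.of_forall fun t => by
        have := norm_integral_le_of_norm_le (μ := P) (f := fun ω => |F n ω t - F 0 ω t|)
          (integrable_const (2 * h t))
          (Eventually.of_forall fun ω => by simpa using hDb n ω t)
        simpa using this) ?_
    · simpa using this
    · have : ∀ᵐ t ∂μ, t ∈ T₀ := hT₀
      filter_upwards [this] with t ht using key1 t ht
  have key3 : Tendsto (fun n => ∫ ω, ∫ t, |F n ω t - F 0 ω t| ∂μ ∂P) atTop (𝓝 0) := by
    refine key2.congr fun n => ?_
    exact (integral_integral_swap (f := fun ω t => |F n ω t - F 0 ω t|) (hDint n)).symm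
  set H : ℝ := ∫ t, h t ∂μ with hH
  have hH0 : 0 ≤ H := integral_nonneg hh_nonneg
  have hIb : ∀ n ω, |∫ t, F n ω t ∂μ| ≤ H := fun n ω => by
    rw [← Real.norm_eq_abs]
    exact norm_integral_le_of_norm_le (f := fun t => F n ω t) hh_int (Eventually.of_forall fun t => hFb n ω t)
  have hIm : ∀ n, AEStronglyMeasurable (fun ω => ∫ t, F n ω t ∂μ) P := fun n =>
    (hFint n).integral_prod_left.aestronglyMeasurable
  have hYI : ∀ n, Integrable (fun ω => Y ω * (∫ t, F n ω t ∂μ) ^ l) P := by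
    intro n
    refine Integrable.of_bound (hY_meas.aestronglyMeasurable.mul ((hIm n).pow l)) (C * H ^ l)
      (Eventually.of_forall fun ω => ?_)
    rw [Real.norm_eq_abs, abs_mul, abs_pow]
    have h1 := pow_le_pow_left₀ (abs_nonneg _) (hIb n ω) l
    exact mul_le_mul (hC ω) h1 (by positivity) ((abs_nonneg _).trans (hC ω))
  set K : ℝ := C * (l * H ^ (l - 1)) with hK
  have hbound : ∀ n, |(∫ ω, Y ω * (∫ t, F n ω t ∂μ) ^ l ∂P) - ∫ ω, Y ω * (∫ t, F 0 ω t ∂μ) ^ l ∂P|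
      ≤ K * ∫ ω, ∫ t, |F n ω t - F 0 ω t| ∂μ ∂P := by
    intro n
    rw [← integral_sub (hYI n) (hYI 0), ← integral_const_mul, ← Real.norm_eq_abs]
    refine norm_integral_le_of_norm_le ((hDint n).integral_prod_left.const_mul K) ?_
    filter_upwards [(hFint n).prod_right_ae, (hFint 0).prod_right_ae] with ω h1 h2
    have hC0 : 0 ≤ C := (abs_nonneg _).trans (hC ω)
    have e1 : |(∫ t, F n ω t ∂μ) - ∫ t, F 0 ω t ∂μ| ≤ ∫ t, |F n ω t - F 0 ω t| ∂μ := by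
      rw [← integral_sub h1 h2]
      exact abs_integral_le_integral_abs
    have e2 := abs_pow_sub_pow_le (∫ t, F n ω t ∂μ) (∫ t, F 0 ω t ∂μ) l
    have e3 : max |∫ t, F n ω t ∂μ| |∫ t, F 0 ω t ∂μ| ^ (l - 1) ≤ H ^ (l - 1) :=
      pow_le_pow_left₀ (by positivity) (max_le (hIb n ω) (hIb 0 ω)) _
    rw [Real.norm_eq_abs, ← mul_sub, abs_mul]
    calc _ ≤ C * ((∫ t, |F n ω t - F 0 ω t| ∂μ) * l * H ^ (l - 1)) := by
          refine mul_le_mul (hC ω) (e2.trans ?_) (abs_nonneg _) hC0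
          gcongr
      _ = _ := by rw [hK]; ring
  rw [tendsto_iff_dist_tendsto_zero]
  refine squeeze_zero (fun _ => dist_nonneg) hbound ?_
  simpa using key3.const_mul K
end

section
/- Let B be a d×d real symmetric positive definite matrix and define w: ℝ^d → ℝ by w(x) = x^T B x − (x^T B x)²/4 if x^T B x < 2 and w(x) = 1 if x^T B x ≥ 2, and set N = {x ∈ ℝ^d : x^T B x = 2}. Then: (i) w is continuously differentiable on all of ℝ^d; (ii) w is twice continuously differentiable on ℝ^d ∖ N; (iii) for every d×d real symmetric matrix a, on the open set {x : x^T B x < 2} one has ½ Σ_{i,j} a_{ij} ∂²_{ij} w(x) = Tr(aB)·(1 − x^T B x / 2) − x^T B a B x, and on the open set {x : x^T B x > 2} one has ½ Σ_{i,j} a_{ij} ∂²_{ij} w(x) = 0. -/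
open Matrix

/-- Second partial derivative `∂²_{ij} f` of a function on `ℝ^d`. -/
noncomputable def secondPartial {d : ℕ} (f : (Fin d → ℝ) → ℝ) (i j : Fin d)
    (x : Fin d → ℝ) : ℝ :=
  fderiv ℝ (fun y => fderiv ℝ f y (Pi.single j 1)) x (Pi.single i 1)

/-- The function `w(x) = xᵀBx − (xᵀBx)²/4` for `xᵀBx < 2` and `w(x) = 1` otherwise. -/
noncomputable def wFun {d : ℕ} (B : Matrix (Fin d) (Fin d) ℝ) (x : Fin d → ℝ) : ℝ :=
  if x ⬝ᵥ (B *ᵥ x) < 2 then x ⬝ᵥ (B *ᵥ x) - (x ⬝ᵥ (B *ᵥ x)) ^ 2 / 4 else 1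

theorem aux_hasDerivAt (s : ℝ) :
    HasDerivAt (fun s : ℝ => (max s 0) ^ 2) (2 * max s 0) s := by
  have key : ∀ y : ℝ, y ≠ 0 → HasDerivAt (fun s : ℝ => (max s 0) ^ 2) (2 * max y 0) y := by
    intro y hy
    rcases lt_or_gt_of_ne hy with h | h
    · have e : (fun s : ℝ => (max s 0) ^ 2) =ᶠ[nhds y] fun _ => (0 : ℝ) := by
        filter_upwards [gt_mem_nhds h] with z hz
        simp [max_eq_right hz.le]
      rw [max_eq_right h.le, mul_zero]
      exact (hasDerivAt_const y (0 : ℝ)).congr_of_eventuallyEq e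
    · have e : (fun s : ℝ => (max s 0) ^ 2) =ᶠ[nhds y] fun z => z ^ 2 := by
        filter_upwards [lt_mem_nhds h] with z hz
        simp [max_eq_left hz.le]
      rw [max_eq_left h.le]
      have := (hasDerivAt_pow 2 y).congr_of_eventuallyEq e
      simpa using this
  by_cases hs : s = 0
  · subst hs
    exact hasDerivAt_of_hasDerivAt_of_ne (g := fun s : ℝ => 2 * max s 0) key
      (by fun_prop) (by fun_prop)
  · exact key s hs

theorem aux_contDiff : ContDiff ℝ 1 (fun s : ℝ => (max s 0) ^ 2) := by
  rw [contDiff_one_iff_deriv]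
  refine ⟨fun s => (aux_hasDerivAt s).differentiableAt, ?_⟩
  have : deriv (fun s : ℝ => (max s 0) ^ 2) = fun s => 2 * max s 0 :=
    funext fun s => (aux_hasDerivAt s).deriv
  rw [this]
  fun_prop

theorem aux_q_contDiff {d : ℕ} (B : Matrix (Fin d) (Fin d) ℝ) (n : WithTop ℕ∞) :
    ContDiff ℝ n (fun x : Fin d → ℝ => x ⬝ᵥ (B *ᵥ x)) := by
  unfold Matrix.mulVec dotProduct
  fun_prop

theorem aux_wFun_eq {d : ℕ} (B : Matrix (Fin d) (Fin d) ℝ) :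
    wFun B = fun x => 1 - (max (2 - x ⬝ᵥ (B *ᵥ x)) 0) ^ 2 / 4 := by
  funext x
  unfold wFun
  split_ifs with h
  · rw [max_eq_left (by linarith)]; ring
  · rw [max_eq_right (by linarith)]; ring

/-- The gradient of the linear form. -/
noncomputable def auxForm {d : ℕ} (u : Fin d → ℝ) : (Fin d → ℝ) →L[ℝ] ℝ :=
  ∑ i, u i • ContinuousLinearMap.proj i

theorem auxForm_apply {d : ℕ} (u v : Fin d → ℝ) : auxForm u v = u ⬝ᵥ v := by
  simp [auxForm, dotProduct]

theorem aux_lin {d : ℕ} (B : Matrix (Fin d) (Fin d) ℝ) (j : Fin d) (x : Fin d → ℝ) :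
    HasFDerivAt (fun y : Fin d → ℝ => (B *ᵥ y) j) (auxForm (B j)) x := by
  have : (fun y : Fin d → ℝ => (B *ᵥ y) j) = auxForm (B j) := by
    funext y; rw [auxForm_apply]; rfl
  rw [this]
  exact (auxForm (B j)).hasFDerivAt

theorem aux_q {d : ℕ} (B : Matrix (Fin d) (Fin d) ℝ) (hB : B.IsSymm) (x : Fin d → ℝ) :
    HasFDerivAt (fun y : Fin d → ℝ => y ⬝ᵥ (B *ᵥ y)) ((2 : ℝ) • auxForm (B *ᵥ x)) x := by
  have h : HasFDerivAt (fun y : Fin d → ℝ => ∑ i, y i * (B *ᵥ y) i) _ x :=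
    HasFDerivAt.fun_sum (u := Finset.univ) fun i _ => (hasFDerivAt_apply i x).mul (aux_lin B i x)
  refine h.congr_fderiv ?_
  ext1 v
  have e : x ⬝ᵥ (B *ᵥ v) = (B *ᵥ x) ⬝ᵥ v := by
    rw [Matrix.dotProduct_mulVec, ← Matrix.mulVec_transpose, hB.eq]
  have e1 : ∑ i, x i * (B i ⬝ᵥ v) = x ⬝ᵥ (B *ᵥ v) := rfl
  simp only [ContinuousLinearMap.sum_apply, ContinuousLinearMap.add_apply,
    ContinuousLinearMap.smul_apply, auxForm_apply, ContinuousLinearMap.proj_apply, smul_eq_mul,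
    Finset.sum_add_distrib]
  rw [e1, e, two_mul]
  rfl

theorem aux_second {d : ℕ} (B : Matrix (Fin d) (Fin d) ℝ) (hB : B.IsSymm) (x : Fin d → ℝ)
    (hx : x ⬝ᵥ (B *ᵥ x) < 2) (i j : Fin d) :
    secondPartial (wFun B) i j x =
      (2 - x ⬝ᵥ (B *ᵥ x)) * B j i - 2 * ((B *ᵥ x) i * (B *ᵥ x) j) := by
  have hc : Continuous (fun x : Fin d → ℝ => x ⬝ᵥ (B *ᵥ x)) :=
    (aux_q_contDiff B 0).continuous
  have ho : IsOpen {x : Fin d → ℝ | x ⬝ᵥ (B *ᵥ x) < 2} := isOpen_lt hc continuous_const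
  have e : (fun y => fderiv ℝ (wFun B) y (Pi.single j 1)) =ᶠ[nhds x]
      fun y => (2 - y ⬝ᵥ (B *ᵥ y)) * (B *ᵥ y) j := by
    filter_upwards [ho.mem_nhds hx] with y hy
    have e2 : wFun B =ᶠ[nhds y] fun y => y ⬝ᵥ (B *ᵥ y) - (y ⬝ᵥ (B *ᵥ y)) ^ 2 / 4 := by
      filter_upwards [ho.mem_nhds hy] with z hz
      exact if_pos hz
    have h := (aux_q B hB y).sub (((aux_q B hB y).pow 2).mul_const (4⁻¹ : ℝ))
    have h' : HasFDerivAt (fun y => y ⬝ᵥ (B *ᵥ y) - (y ⬝ᵥ (B *ᵥ y)) ^ 2 / 4) _ y := h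
    rw [e2.fderiv_eq, h'.fderiv]
    simp [auxForm_apply]
    ring
  unfold secondPartial
  rw [e.fderiv_eq]
  have h := ((aux_q B hB x).const_sub 2).mul (aux_lin B j x)
  have h' : HasFDerivAt (fun y => (2 - y ⬝ᵥ (B *ᵥ y)) * (B *ᵥ y) j) _ x := h
  rw [h'.fderiv]
  simp [auxForm_apply]
  ring

theorem aux_second' {d : ℕ} (B : Matrix (Fin d) (Fin d) ℝ) (x : Fin d → ℝ)
    (hx : 2 < x ⬝ᵥ (B *ᵥ x)) (i j : Fin d) :
    secondPartial (wFun B) i j x = 0 := by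
  have hc : Continuous (fun x : Fin d → ℝ => x ⬝ᵥ (B *ᵥ x)) :=
    (aux_q_contDiff B 0).continuous
  have ho : IsOpen {x : Fin d → ℝ | 2 < x ⬝ᵥ (B *ᵥ x)} := isOpen_lt continuous_const hc
  have e : (fun y => fderiv ℝ (wFun B) y (Pi.single j 1)) =ᶠ[nhds x] fun y => (0 : ℝ) := by
    filter_upwards [ho.mem_nhds hx] with y hy
    have e2 : wFun B =ᶠ[nhds y] fun y => (1 : ℝ) := by
      filter_upwards [ho.mem_nhds hy] with z hz
      exact if_neg (not_lt.mpr (le_of_lt hz))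
    rw [e2.fderiv_eq]
    simp
  unfold secondPartial
  rw [e.fderiv_eq]
  simp

/-- **Regularity and second-order identities for the truncated quadratic `w`.**
(i) `w ∈ C¹(ℝ^d)`; (ii) `w ∈ C²(ℝ^d ∖ N)` where `N = {x : xᵀBx = 2}`;
(iii) for any symmetric `a`, `½ Σ a_{ij} ∂²_{ij} w = Tr(aB)(1 − xᵀBx/2) − xᵀBaBx`
on `{xᵀBx < 2}`, and `½ Σ a_{ij} ∂²_{ij} w = 0` on `{xᵀBx > 2}`. -/
theorem wFun_regularity_and_second_derivative {d : ℕ}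
    (B : Matrix (Fin d) (Fin d) ℝ) (hB : B.PosDef) :
    ContDiff ℝ 1 (wFun B) ∧
    ContDiffOn ℝ 2 (wFun B) {x : Fin d → ℝ | x ⬝ᵥ (B *ᵥ x) ≠ 2} ∧
    (∀ a : Matrix (Fin d) (Fin d) ℝ, a.IsSymm →
      (∀ x : Fin d → ℝ, x ⬝ᵥ (B *ᵥ x) < 2 →
        (1/2 : ℝ) * ∑ i, ∑ j, a i j * secondPartial (wFun B) i j x
          = (a * B).trace * (1 - (x ⬝ᵥ (B *ᵥ x)) / 2) - x ⬝ᵥ ((B * a * B) *ᵥ x)) ∧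
      (∀ x : Fin d → ℝ, 2 < x ⬝ᵥ (B *ᵥ x) →
        (1/2 : ℝ) * ∑ i, ∑ j, a i j * secondPartial (wFun B) i j x = 0)) := by
  have hS : B.IsSymm := by
    have := hB.isHermitian
    simpa [Matrix.IsHermitian, Matrix.IsSymm, Matrix.conjTranspose_eq_transpose_of_trivial] using this
  have hc : Continuous (fun x : Fin d → ℝ => x ⬝ᵥ (B *ᵥ x)) :=
    (aux_q_contDiff B 0).continuous
  refine ⟨?_, ?_, fun a _ => ⟨fun x hx => ?_, fun x hx => ?_⟩⟩
  · rw [aux_wFun_eq]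
    have h := aux_contDiff.comp (contDiff_const (c := (2 : ℝ)).sub (aux_q_contDiff B 1))
    exact contDiff_const.sub (h.div_const 4)
  · intro x hx
    apply ContDiffAt.contDiffWithinAt
    rcases lt_or_gt_of_ne (show x ⬝ᵥ (B *ᵥ x) ≠ 2 from hx) with h | h
    · have ho : IsOpen {x : Fin d → ℝ | x ⬝ᵥ (B *ᵥ x) < 2} := isOpen_lt hc continuous_const
      have e2 : wFun B =ᶠ[nhds x] fun y => y ⬝ᵥ (B *ᵥ y) - (y ⬝ᵥ (B *ᵥ y)) ^ 2 / 4 := by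
        filter_upwards [ho.mem_nhds h] with z hz
        exact if_pos hz
      refine ContDiffAt.congr_of_eventuallyEq ?_ e2
      exact ((aux_q_contDiff B 2).sub (((aux_q_contDiff B 2).pow 2).div_const 4)).contDiffAt
    · have ho : IsOpen {x : Fin d → ℝ | 2 < x ⬝ᵥ (B *ᵥ x)} := isOpen_lt continuous_const hc
      have e2 : wFun B =ᶠ[nhds x] fun y => (1 : ℝ) := by
        filter_upwards [ho.mem_nhds h] with z hz
        exact if_neg (not_lt.mpr (le_of_lt hz))
      exact contDiffAt_const.congr_of_eventuallyEq e2
  · simp only [aux_second B hS x hx]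
    have e1 : x ⬝ᵥ ((B * a * B) *ᵥ x) = ∑ i, ∑ j, a i j * ((B *ᵥ x) i * (B *ᵥ x) j) := by
      rw [← Matrix.mulVec_mulVec, ← Matrix.mulVec_mulVec, Matrix.dotProduct_mulVec,
        ← Matrix.mulVec_transpose, hS.eq]
      generalize B *ᵥ x = u
      simp only [dotProduct, Matrix.mulVec, Finset.mul_sum]
      exact Finset.sum_congr rfl fun i _ => Finset.sum_congr rfl fun j _ => by ring
    have e2 : (a * B).trace = ∑ i, ∑ j, a i j * B j i := by
      simp [Matrix.trace, Matrix.mul_apply]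
    rw [e1, e2, Finset.mul_sum, Finset.sum_mul, ← Finset.sum_sub_distrib]
    refine Finset.sum_congr rfl fun i _ => ?_
    rw [Finset.mul_sum, Finset.sum_mul, ← Finset.sum_sub_distrib]
    exact Finset.sum_congr rfl fun j _ => by ring
  · simp [aux_second' B x hx]
end

section
/- Let a be a d×d real symmetric positive semidefinite matrix, Q and D d×d real symmetric positive definite matrices, r > 0, l > 0, and let G be a d×d real symmetric positive definite matrix with G Q⁻¹ G = r·l·D. Define w(x) = x^T G x. Then for every x ∈ ℝ^d, inf_{u ∈ ℝ^d} [ ½ Σ_{i,j} a_{ij} ∂²_{ij} w(x) + u·∇w(x) + l·u^T Q u + r·x^T D x ] = Tr(aG), and the infimum is attained at u*(x) = −(1/l) Q⁻¹ G x. Equivalently, for every x ∈ ℝ^d, inf_{u ∈ ℝ^d} ( 2⟨u, Gx⟩ + l·u^T Q u ) = −(1/l)(Gx)^T Q⁻¹ (Gx) = −r·x^T D x. -/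
open Matrix

lemma quad_symm {d : ℕ} {G : Matrix (Fin d) (Fin d) ℝ} (hG : Gᵀ = G) (x y : Fin d → ℝ) :
    x ⬝ᵥ (G *ᵥ y) = y ⬝ᵥ (G *ᵥ x) := by
  rw [dotProduct_mulVec, ← mulVec_transpose, hG, dotProduct_comm]

lemma fderiv_quad {d : ℕ} {G : Matrix (Fin d) (Fin d) ℝ} (hG : Gᵀ = G) (x u : Fin d → ℝ) :
    fderiv ℝ (fun z : Fin d → ℝ => z ⬝ᵥ (G *ᵥ z)) x u = 2 * (u ⬝ᵥ (G *ᵥ x)) := by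
  have hd : DifferentiableAt ℝ (fun z : Fin d → ℝ => z ⬝ᵥ (G *ᵥ z)) x := by
    unfold Matrix.mulVec dotProduct
    fun_prop
  rw [← hd.lineDeriv_eq_fderiv]
  apply HasLineDerivAt.lineDeriv
  unfold HasLineDerivAt
  have h : (fun t : ℝ => (x + t • u) ⬝ᵥ (G *ᵥ (x + t • u))) =
      fun t : ℝ => x ⬝ᵥ (G *ᵥ x) + t * (2 * (u ⬝ᵥ (G *ᵥ x))) + t ^ 2 * (u ⬝ᵥ (G *ᵥ u)) := by
    funext t
    simp only [mulVec_add, mulVec_smul, add_dotProduct, dotProduct_add, smul_dotProduct,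
      dotProduct_smul, smul_eq_mul]
    rw [quad_symm hG x u]
    ring
  rw [h]
  have h1 := (((hasDerivAt_id (0 : ℝ)).mul_const (2 * (u ⬝ᵥ (G *ᵥ x)))).const_add
    (x ⬝ᵥ (G *ᵥ x))).add (((hasDerivAt_id (0 : ℝ)).pow 2).mul_const (u ⬝ᵥ (G *ᵥ u)))
  convert h1 using 1
  · funext t
    simp
  · simp

lemma secondPartial_quad {d : ℕ} {G : Matrix (Fin d) (Fin d) ℝ} (hG : Gᵀ = G) (i j : Fin d)
    (x : Fin d → ℝ) :
    secondPartial (fun z : Fin d → ℝ => z ⬝ᵥ (G *ᵥ z)) i j x = 2 * G j i := by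
  unfold secondPartial
  simp only [fderiv_quad hG]
  have hd : DifferentiableAt ℝ
      (fun y : Fin d → ℝ => 2 * ((Pi.single j 1 : Fin d → ℝ) ⬝ᵥ (G *ᵥ y))) x := by
    unfold Matrix.mulVec dotProduct
    fun_prop
  rw [← hd.lineDeriv_eq_fderiv]
  apply HasLineDerivAt.lineDeriv
  unfold HasLineDerivAt
  have h : (fun t : ℝ => 2 * ((Pi.single j 1 : Fin d → ℝ) ⬝ᵥ
        (G *ᵥ (x + t • (Pi.single i 1 : Fin d → ℝ))))) =
      fun t : ℝ => 2 * ((Pi.single j 1 : Fin d → ℝ) ⬝ᵥ (G *ᵥ x)) + t * (2 * G j i) := by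
    funext t
    simp only [mulVec_add, mulVec_smul, dotProduct_add, dotProduct_smul, smul_eq_mul]
    simp
    ring
  rw [h]
  simpa using ((hasDerivAt_id (0 : ℝ)).mul_const (2 * G j i)).const_add
    (2 * ((Pi.single j 1 : Fin d → ℝ) ⬝ᵥ (G *ᵥ x)))

lemma half_sum_quad {d : ℕ} {G : Matrix (Fin d) (Fin d) ℝ} (hG : Gᵀ = G)
    (a : Matrix (Fin d) (Fin d) ℝ) (x : Fin d → ℝ) :
    (1/2 : ℝ) * ∑ i, ∑ j, a i j * secondPartial (fun z => z ⬝ᵥ (G *ᵥ z)) i j x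
      = (a * G).trace := by
  simp only [secondPartial_quad hG, Matrix.trace, Matrix.diag, Matrix.mul_apply, Finset.mul_sum]
  refine Finset.sum_congr rfl fun i _ => Finset.sum_congr rfl fun j _ => ?_
  ring

lemma complete_square {d : ℕ} {Q : Matrix (Fin d) (Fin d) ℝ} (hQ : Q.PosDef) {l : ℝ}
    (hl : 0 < l) (p u : Fin d → ℝ) :
    2 * (u ⬝ᵥ p) + l * (u ⬝ᵥ (Q *ᵥ u)) = -(1/l) * (p ⬝ᵥ (Q⁻¹ *ᵥ p))
      + l * ((u + (1/l) • (Q⁻¹ *ᵥ p)) ⬝ᵥ (Q *ᵥ (u + (1/l) • (Q⁻¹ *ᵥ p)))) := by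
  have hs : Qᵀ = Q := by simpa using hQ.isHermitian.eq
  have hu : IsUnit Q.det := hQ.det_pos.ne'.isUnit
  have hc : Q *ᵥ (Q⁻¹ *ᵥ p) = p := by
    rw [mulVec_mulVec, Matrix.mul_nonsing_inv _ hu, one_mulVec]
  simp only [mulVec_add, mulVec_smul, add_dotProduct, dotProduct_add, smul_dotProduct,
      dotProduct_smul, smul_eq_mul]
  rw [quad_symm hs (Q⁻¹ *ᵥ p) u, hc, dotProduct_comm (Q⁻¹ *ᵥ p) p]
  field_simp
  ring

/-- **The quadratic `w(x) = xᵀGx` solves the ergodic HJB equation.**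
With `G ≻ 0` satisfying `G Q⁻¹ G = r·l·D`, for every `x`:
`inf_u [½ Σ a_{ij} ∂²_{ij} w(x) + u·∇w(x) + l uᵀQu + r xᵀDx] = Tr(aG)`, the infimum
being attained at `u*(x) = −(1/l) Q⁻¹ G x`; equivalently,
`inf_u (2⟨u, Gx⟩ + l uᵀQu) = −(1/l)(Gx)ᵀQ⁻¹(Gx) = −r xᵀDx`. -/
theorem hjb_quadratic_solution {d : ℕ}
    (a Q D G : Matrix (Fin d) (Fin d) ℝ)
    (ha : a.PosSemidef) (hQ : Q.PosDef) (hD : D.PosDef) (hG : G.PosDef)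
    (r l : ℝ) (hr : 0 < r) (hl : 0 < l)
    (hGQ : G * Q⁻¹ * G = (r * l) • D) :
    ∀ x : Fin d → ℝ,
      (IsLeast {y : ℝ | ∃ u : Fin d → ℝ,
          y = (1/2 : ℝ) * ∑ i, ∑ j, a i j *
                secondPartial (fun z => z ⬝ᵥ (G *ᵥ z)) i j x
              + fderiv ℝ (fun z => z ⬝ᵥ (G *ᵥ z)) x u
              + l * (u ⬝ᵥ (Q *ᵥ u)) + r * (x ⬝ᵥ (D *ᵥ x))}
        ((a * G).trace)) ∧
      ((1/2 : ℝ) * ∑ i, ∑ j, a i j *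
            secondPartial (fun z => z ⬝ᵥ (G *ᵥ z)) i j x
          + fderiv ℝ (fun z => z ⬝ᵥ (G *ᵥ z)) x ((-(1/l)) • (Q⁻¹ *ᵥ (G *ᵥ x)))
          + l * (((-(1/l)) • (Q⁻¹ *ᵥ (G *ᵥ x))) ⬝ᵥ (Q *ᵥ ((-(1/l)) • (Q⁻¹ *ᵥ (G *ᵥ x)))))
          + r * (x ⬝ᵥ (D *ᵥ x)) = (a * G).trace) ∧
      (IsLeast {y : ℝ | ∃ u : Fin d → ℝ,
          y = 2 * (u ⬝ᵥ (G *ᵥ x)) + l * (u ⬝ᵥ (Q *ᵥ u))}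
        (-(1/l) * ((G *ᵥ x) ⬝ᵥ (Q⁻¹ *ᵥ (G *ᵥ x))))) ∧
      (-(1/l) * ((G *ᵥ x) ⬝ᵥ (Q⁻¹ *ᵥ (G *ᵥ x))) = -(r * (x ⬝ᵥ (D *ᵥ x)))) := by
  intro x
  have hGs : Gᵀ = G := by simpa using hG.isHermitian.eq
  have hval : -(1/l) * ((G *ᵥ x) ⬝ᵥ (Q⁻¹ *ᵥ (G *ᵥ x))) = -(r * (x ⬝ᵥ (D *ᵥ x))) := by
    have h1 : (G *ᵥ x) ⬝ᵥ (Q⁻¹ *ᵥ (G *ᵥ x)) = r * l * (x ⬝ᵥ (D *ᵥ x)) := by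
      rw [dotProduct_comm, quad_symm hGs, mulVec_mulVec, mulVec_mulVec, hGQ,
        smul_mulVec, dotProduct_smul, smul_eq_mul]
    rw [h1]
    field_simp
  have hlow : ∀ u : Fin d → ℝ, -(1/l) * ((G *ᵥ x) ⬝ᵥ (Q⁻¹ *ᵥ (G *ᵥ x))) ≤
      2 * (u ⬝ᵥ (G *ᵥ x)) + l * (u ⬝ᵥ (Q *ᵥ u)) := by
    intro u
    rw [complete_square hQ hl]
    have := hQ.posSemidef.dotProduct_mulVec_nonneg (u + (1/l) • (Q⁻¹ *ᵥ (G *ᵥ x)))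
    simp only [star_trivial] at this
    have := mul_nonneg hl.le this
    linarith
  have hmin : 2 * (((-(1/l)) • (Q⁻¹ *ᵥ (G *ᵥ x))) ⬝ᵥ (G *ᵥ x))
      + l * (((-(1/l)) • (Q⁻¹ *ᵥ (G *ᵥ x))) ⬝ᵥ (Q *ᵥ ((-(1/l)) • (Q⁻¹ *ᵥ (G *ᵥ x)))))
      = -(1/l) * ((G *ᵥ x) ⬝ᵥ (Q⁻¹ *ᵥ (G *ᵥ x))) := by
    rw [complete_square hQ hl, neg_smul, neg_add_cancel]
    simp
  simp only [half_sum_quad hGs, fderiv_quad hGs]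
  refine ⟨⟨⟨(-(1/l)) • (Q⁻¹ *ᵥ (G *ᵥ x)), ?_⟩, ?_⟩, ?_, ⟨⟨_, hmin.symm⟩, ?_⟩, hval⟩
  · linarith
  · rintro y ⟨u, rfl⟩
    linarith [hlow u]
  · linarith
  · rintro y ⟨u, rfl⟩
    exact hlow u
end

section
/- Let r > 0, l > 0, a > 0 be real numbers, set Σ = √(r/l) and σ² = a/(2Σ), and let π be the centered Gaussian measure on ℝ with variance σ². Then: (i) for every f ∈ C²_c(ℝ), ∫_ℝ [ (a/2)·f''(x) − Σ·x·f'(x) ] π(dx) = 0, i.e. π is an invariant (stationary) measure for the generator of the Ornstein–Uhlenbeck process dX_t = √a dW_t − Σ X_t dt; and (ii) ∫_ℝ ( r·x² + l·(Σx)² ) π(dx) = a·√(r·l), i.e. the linear feedback control u(x) = −Σx achieves the cost value a√(rl). -/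
open MeasureTheory ProbabilityTheory

/-- **The Gaussian stationary measure of the optimal Ornstein–Uhlenbeck feedback.**
With `Σ = √(r/l)` and `σ² = a/(2Σ)`, the centered Gaussian `π` with variance `σ²`
satisfies: (i) `∫ [(a/2) f''(x) − Σ x f'(x)] dπ = 0` for every `f ∈ C²_c(ℝ)`
(stationarity for the OU generator), and (ii) `∫ (r x² + l (Σx)²) dπ = a√(rl)`. -/
theorem ou_feedback_gaussian_cost (r l a : ℝ) (hr : 0 < r) (hl : 0 < l) (ha : 0 < a) :
    (∀ f : ℝ → ℝ, ContDiff ℝ 2 f → HasCompactSupport f →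
      ∫ x, ((a / 2) * deriv (deriv f) x - Real.sqrt (r / l) * x * deriv f x)
        ∂(gaussianReal 0 (Real.toNNReal (a / (2 * Real.sqrt (r / l))))) = 0) ∧
    (∫ x, (r * x ^ 2 + l * (Real.sqrt (r / l) * x) ^ 2)
        ∂(gaussianReal 0 (Real.toNNReal (a / (2 * Real.sqrt (r / l)))))
      = a * Real.sqrt (r * l)) := by
  set S := Real.sqrt (r / l) with hS
  have hSpos : 0 < S := Real.sqrt_pos.mpr (div_pos hr hl)
  have hvpos : 0 < a / (2 * S) := by positivity
  set v := Real.toNNReal (a / (2 * S)) with hv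
  have hvc : (v : ℝ) = a / (2 * S) := Real.coe_toNNReal _ hvpos.le
  have hv0 : v ≠ 0 := by
    intro h
    rw [h] at hvc
    simp only [NNReal.coe_zero] at hvc
    linarith
  have hS2 : S ^ 2 = r / l := Real.sq_sqrt (div_pos hr hl).le
  constructor
  · intro f hf hfc
    rw [integral_gaussianReal_eq_integral_smul hv0]
    have hf1 : ContDiff ℝ 1 (deriv f) := by
      have h2 : ContDiff ℝ (1 + 1) f := by
        rw [one_add_one_eq_two]
        exact hf
      exact ContDiff.deriv' h2
    have hc1 : Continuous (deriv f) := hf1.continuous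
    have hc2 : Continuous (deriv (deriv f)) := hf1.continuous_deriv le_rfl
    have hs1 : HasCompactSupport (deriv f) := hfc.deriv
    have hs2 : HasCompactSupport (deriv (deriv f)) := hs1.deriv
    have hφ : ∀ x, HasDerivAt (gaussianPDFReal 0 v) (-(x / v) * gaussianPDFReal 0 v x) x := by
      intro x
      have h1 : HasDerivAt (fun y : ℝ => -(y - 0) ^ 2 / (2 * (v : ℝ))) (-(x / v)) x := by
        have h := ((((hasDerivAt_id x).sub_const 0).pow 2).neg).div_const (2 * (v : ℝ))
        refine h.congr_deriv ?_
        have : (v : ℝ) ≠ 0 := by exact_mod_cast hv0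
        simp
        field_simp
      have h2 := (h1.exp).const_mul ((Real.sqrt (2 * Real.pi * v))⁻¹)
      rw [gaussianPDFReal_def]
      refine h2.congr_deriv ?_
      ring
    have hφc : Continuous (gaussianPDFReal 0 v) :=
      continuous_iff_continuousAt.mpr fun x => (hφ x).continuousAt
    refine integral_eq_zero_of_hasDerivAt_of_integrable
      (f := fun x => (a / 2) * (gaussianPDFReal 0 v x * deriv f x)) ?_ ?_ ?_
    · intro x
      have h := ((hφ x).mul ((hf1.differentiable one_ne_zero) x).hasDerivAt).const_mul (a / 2)
      refine h.congr_deriv ?_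
      rw [hvc, smul_eq_mul]
      field_simp
      ring
    · refine Continuous.integrable_of_hasCompactSupport (by fun_prop) ?_
      refine HasCompactSupport.smul_left (f := gaussianPDFReal 0 v) ?_
      exact (hs2.mul_left (f := fun _ => a / 2)).sub (hs1.mul_left (f := fun x => S * x))
    · refine Continuous.integrable_of_hasCompactSupport (by fun_prop) ?_
      exact (hs1.mul_left (f := gaussianPDFReal 0 v)).mul_left (f := fun _ => a / 2)
  · have hint : ∫ x, x ^ 2 ∂(gaussianReal 0 v) = v := by
      rw [← variance_fun_id_gaussianReal (μ := 0) (v := v),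
        variance_of_integral_eq_zero (by fun_prop) (by simp)]
    have he : ∀ x : ℝ, r * x ^ 2 + l * (S * x) ^ 2 = (2 * r) * x ^ 2 := by
      intro x
      rw [mul_pow, hS2]
      field_simp
      ring
    simp_rw [he]
    rw [integral_const_mul, hint, hvc]
    have hrl : Real.sqrt (r * l) = l * S := by
      rw [Real.sqrt_eq_iff_mul_self_eq (by positivity) (by positivity)]
      have : l * S * (l * S) = l ^ 2 * S ^ 2 := by ring
      rw [this, hS2]
      field_simp
    rw [hrl]
    have : r = l * S ^ 2 := by rw [hS2]; field_simp
    field_simp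
    linarith
end

section
/- Let G be a bounded open subset of ℝ^d with boundary ∂G, let V: ℝ^d → ℝ be twice continuously differentiable with V(x) = 0 for every x ∈ ∂G, and let γ: ∂G → ℝ^d be continuous with γ(x)·∇V(x) < 0 for every x ∈ ∂G. Then any finite signed Borel measure ρ on ℝ^d that is supported on ∂G and satisfies ∫_{∂G} γ(x)·∇f(x) ρ(dx) = 0 for every f ∈ C²_c(ℝ^d) must be the zero measure. -/
open MeasureTheory Matrix

/-- **Uniqueness of the boundary measure for oblique reflection.**
Let `G ⊆ ℝ^d` be bounded open, `V ∈ C²` vanish on `∂G`, and `γ` be continuous on `∂G`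
with `γ(x)·∇V(x) < 0` there. Then any finite signed measure `ρ` supported on `∂G`
with `∫_{∂G} γ(x)·∇f(x) ρ(dx) = 0` for all `f ∈ C²_c(ℝ^d)` is the zero measure. -/
theorem boundary_measure_unique {d : ℕ}
    (G : Set (Fin d → ℝ)) (hGopen : IsOpen G) (hGbdd : Bornology.IsBounded G)
    (V : (Fin d → ℝ) → ℝ) (hV : ContDiff ℝ 2 V)
    (hV0 : ∀ x ∈ frontier G, V x = 0)
    (γ : (Fin d → ℝ) → (Fin d → ℝ)) (hγ : ContinuousOn γ (frontier G))
    (hγV : ∀ x ∈ frontier G, fderiv ℝ V x (γ x) < 0)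
    (ρ : SignedMeasure (Fin d → ℝ))
    (hsupp : ρ.totalVariation (frontier G)ᶜ = 0)
    (hconstraint : ∀ f : (Fin d → ℝ) → ℝ, ContDiff ℝ 2 f → HasCompactSupport f →
      (∫ x, fderiv ℝ f x (γ x) ∂ρ.toJordanDecomposition.posPart)
        - (∫ x, fderiv ℝ f x (γ x) ∂ρ.toJordanDecomposition.negPart) = 0) :
    ρ = 0 := by
  classical
  set μ := ρ.toJordanDecomposition.posPart with hμ
  set ν := ρ.toJordanDecomposition.negPart with hν
  set K := frontier G with hK
  have hKc : IsCompact K := Metric.isCompact_of_isClosed_isBounded isClosed_frontier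
    (hGbdd.closure.subset frontier_subset_closure)
  have hKm : MeasurableSet K := isClosed_frontier.measurableSet
  have htv : ρ.totalVariation = μ + ν := rfl
  rw [htv] at hsupp
  have hμK : ∀ᵐ x ∂μ, x ∈ K := by
    have : μ Kᶜ = 0 := by
      have := hsupp
      simp only [Measure.add_apply, add_eq_zero] at this
      exact this.1
    exact this
  have hνK : ∀ᵐ x ∂ν, x ∈ K := by
    have : ν Kᶜ = 0 := by
      have := hsupp
      simp only [Measure.add_apply, add_eq_zero] at this
      exact this.2
    exact this
  obtain ⟨S, hS, hμS, hνS⟩ := ρ.toJordanDecomposition.mutuallySingular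
  have hμS' : ∀ᵐ x ∂μ, x ∉ S := by
    rw [ae_iff]; simpa using hμS
  have hνS' : ∀ᵐ x ∂ν, x ∈ S := hνS
  let h : (Fin d → ℝ) → ℝ := K.indicator (fun x => fderiv ℝ V x (γ x))
  let u : (Fin d → ℝ) → ℝ := fun x => S.indicator (fun x => -h x) x + Sᶜ.indicator h x
  have hcont : ContinuousOn (fun x => fderiv ℝ V x (γ x)) K :=
    (hV.continuous_fderiv (by norm_num)).continuousOn.clm_apply hγ
  have hint : Integrable h (μ + ν) :=
    (integrable_indicator_iff hKm).2 (hcont.integrableOn_compact hKc)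
  have huint : Integrable u (μ + ν) :=
    (hint.neg.indicator hS).add (hint.indicator hS.compl)
  have key : ∀ g : (Fin d → ℝ) → ℝ, ContDiff ℝ ((⊤ : ℕ∞) : WithTop ℕ∞) g → HasCompactSupport g →
      ∫ x, g x • u x ∂(μ + ν) = 0 := by
    intro g hg hgc
    have hg2 : ContDiff ℝ 2 g := contDiff_infty.1 hg 2
    obtain ⟨C, hC⟩ := hgc.exists_bound_of_continuous hg.continuous
    have hgu : Integrable (fun x => g x • u x) (μ + ν) :=
      huint.bdd_mul (c := C) hg.continuous.aestronglyMeasurable (Filter.Eventually.of_forall hC)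
    have hc := hconstraint (fun x => g x * V x) (hg2.mul hV) hgc.mul_right
    have hd : ∀ x ∈ K, fderiv ℝ (fun x => g x * V x) x (γ x) = g x * h x := by
      intro x hx
      rw [fderiv_fun_mul (hg2.differentiable (by norm_num) x) (hV.differentiable (by norm_num) x)]
      simp [h, hx, hV0 x hx]
    rw [integral_add_measure (hgu.mono_measure (Measure.le_add_right le_rfl))
      (hgu.mono_measure (Measure.le_add_left le_rfl)), ← hc, sub_eq_add_neg, ← integral_neg]
    congr 1
    · apply integral_congr_ae
      filter_upwards [hμK, hμS'] with x hx hxS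
      rw [hd x hx]
      simp [u, hxS]
    · apply integral_congr_ae
      filter_upwards [hνK, hνS'] with x hx hxS
      rw [hd x hx]
      simp [u, hxS]
  have hu0 := ae_eq_zero_of_integral_contDiff_smul_eq_zero huint.locallyIntegrable key
  have hfalse : ∀ᵐ x ∂(μ + ν), False := by
    have hKae : ∀ᵐ x ∂(μ + ν), x ∈ K := hsupp
    filter_upwards [hKae, hu0] with x hx hux
    have := hγV x hx
    by_cases hxS : x ∈ S <;> simp [u, h, hxS, hx] at hux <;> linarith
  have hz' : μ = 0 ∧ ν = 0 := by
    simpa [ae_iff] using hfalse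
  rw [← SignedMeasure.toSignedMeasure_toJordanDecomposition ρ]
  simp [JordanDecomposition.toSignedMeasure, ← hμ, ← hν, hz'.1, hz'.2]
end
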